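/- Let G ≤ PL₊(I) be a chainless group, and let n − 1 be the number of G-orbits of the set of breakpoints of elements of G, assumed finite. Then G does not admit a tower of height n; consequently G is soluble with derived length at most n − 1. -/

import Mathlib

open Set

namespace PLPaper

/-- We model `PL₊(I)` inside the group of bijections of `ℝ` with *opposite*
composition, so that the group acts on `ℝ` on the right:
`x · (g * h) = (x · g) · h`. -/
abbrev PermR : Type := (Equiv.Perm ℝ)ᵐᵒᵖ

/-- The (right) action of `g` on the point `x`. -/
def ap (g : PermR) (x : ℝ) : ℝ := g.unop x

/-- `g` is affine on a neighbourhood of `x`. -/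
def IsLocallyAffineAt (g : PermR) (x : ℝ) : Prop :=
  ∃ m b : ℝ, ∀ᶠ y in nhds x, ap g y = m * y + b

/-- The breakpoints of `g`: points of `(0,1)` where `g` is not locally affine
(equivalently, for a PL map, where the derivative fails to exist). -/
def Breakpoints (g : PermR) : Set ℝ :=
  {x ∈ Ioo (0:ℝ) 1 | ¬ IsLocallyAffineAt g x}

/-- `g` is an orientation-preserving piecewise-linear homeomorphism of `[0,1]`
(extended by the identity to all of `ℝ`), with finitely many breakpoints. -/
def IsPL (g : PermR) : Prop :=
  StrictMono (ap g) ∧ (∀ x ∉ Ioo (0:ℝ) 1, ap g x = x) ∧ (Breakpoints g).Finite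

/-- The support of `g`. -/
def Supp (g : PermR) : Set ℝ := {x | ap g x ≠ x}

/-- `(a,b)` is an orbital of `g`, i.e. a connected component of `Supp g`. -/
def IsOrbital (g : PermR) (a b : ℝ) : Prop :=
  a < b ∧ Ioo a b ⊆ Supp g ∧ a ∉ Supp g ∧ b ∉ Supp g

/-- The support of a subgroup `G`. -/
def GSupp (G : Subgroup PermR) : Set ℝ := ⋃ g ∈ (G : Set PermR), Supp g

/-- `(a,b)` is an orbital of the group `G`, i.e. a connected component of its support. -/
def IsGroupOrbital (G : Subgroup PermR) (a b : ℝ) : Prop :=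
  a < b ∧ Ioo a b ⊆ GSupp G ∧ a ∉ GSupp G ∧ b ∉ GSupp G

/-- The pair `g, h` carries a transition chain: orbitals `(a,b)` of `g` and
`(c,d)` of `h` with `a < c < b < d`. -/
def ElemsTransitionChain (g h : PermR) : Prop :=
  ∃ a b c d : ℝ, IsOrbital g a b ∧ IsOrbital h c d ∧ a < c ∧ c < b ∧ b < d

/-- The pair `g, h` carries a one-sided overlap: orbitals `(a,b)` of `g` and
`(a,c)` of `h`, or `(a,b)` of `g` and `(c,b)` of `h`, where `a < c < b`. -/
def ElemsOneSidedOverlap (g h : PermR) : Prop :=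
  ∃ a b c : ℝ, a < c ∧ c < b ∧
    ((IsOrbital g a b ∧ IsOrbital h a c) ∨ (IsOrbital g a b ∧ IsOrbital h c b))

def AdmitsTransitionChain (G : Subgroup PermR) : Prop :=
  ∃ g ∈ G, ∃ h ∈ G, ElemsTransitionChain g h

def AdmitsOneSidedOverlap (G : Subgroup PermR) : Prop :=
  ∃ g ∈ G, ∃ h ∈ G, ElemsOneSidedOverlap g h

/-- `G` admits a bad overlap: orbitals `A` of `f ∈ G` and `B` of `g ∈ G` which
intersect, are distinct, and neither closure is contained in the other orbital. -/
def AdmitsBadOverlap (G : Subgroup PermR) : Prop :=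
  ∃ f ∈ G, ∃ g ∈ G, ∃ a b c d : ℝ, IsOrbital f a b ∧ IsOrbital g c d ∧
    (Ioo a b ∩ Ioo c d).Nonempty ∧ Ioo a b ≠ Ioo c d ∧
    ¬ Icc a b ⊆ Ioo c d ∧ ¬ Icc c d ⊆ Ioo a b

/-- A tower: a set of signed orbitals `((a,b), g)` with pairwise nested orbitals,
where equal orbitals force equal signatures. -/
def IsTower (T : Set ((ℝ × ℝ) × PermR)) : Prop :=
  (∀ p ∈ T, IsOrbital p.2 p.1.1 p.1.2) ∧
  (∀ p ∈ T, ∀ q ∈ T,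
      Ioo p.1.1 p.1.2 ⊆ Ioo q.1.1 q.1.2 ∨ Ioo q.1.1 q.1.2 ⊆ Ioo p.1.1 p.1.2) ∧
  (∀ p ∈ T, ∀ q ∈ T, p.1 = q.1 → p.2 = q.2)

/-- `G` admits the tower `T` if `T` is a tower all of whose signatures lie in `G`. -/
def AdmitsTower (G : Subgroup PermR) (T : Set ((ℝ × ℝ) × PermR)) : Prop :=
  IsTower T ∧ ∀ p ∈ T, p.2 ∈ G

def AdmitsInfiniteTower (G : Subgroup PermR) : Prop :=
  ∃ T : Set ((ℝ × ℝ) × PermR), AdmitsTower G T ∧ T.Infinite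

/-- The set of breakpoints of the elements of a set `S`. -/
def BreakSet (S : Set PermR) : Set ℝ := ⋃ g ∈ S, Breakpoints g

/-- The derived length of a group: the least `n` with `derivedSeries G n = ⊥`. -/
noncomputable def derivedLength (G : Type*) [Group G] : ℕ :=
  sInf {n : ℕ | derivedSeries G n = ⊥}

/-- The `G`-orbit of a point `x`. -/
def orbitOf (G : Subgroup PermR) (x : ℝ) : Set ℝ := {y | ∃ g ∈ G, ap g x = y}

/-!
In a chainless group `G ≤ PL₊(I)` two intersecting orbitals are equal or strictly nested. The
reason is that germs of `PL₊(I)` at a fixed point are affine, so commutators are trivial near a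
common fixed point: if `g` fixes the left end of an orbital `(a, c)` of `h` but moves `c`, then
`⁅h, g⁆` (or `⁅h, g⁻¹⁆`) moves `c` and is trivial near `a`, which gives a transition chain.

To an orbital `(a, b)` attach the set of `G`-orbits of breakpoints that meet it. This set is
nonempty. It also grows strictly with the orbital: let an orbital `(a, b)` of `f` be strictly inside
another one with left end `l`. Then `f` is trivial near `l`, and the last point `c ≤ a` at which `f`
stops being locally trivial is a breakpoint of `f` with no translate in `(a, b)`. As there are only
`n - 1` orbits of breakpoints, towers have height at most `n - 1`.

If `(a, b)` is an orbital of an element of the `(k+1)`-st derived subgroup, then some element of the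
`k`-th derived subgroup moves `a`, and its orbital around `a` strictly contains `(a, b)`. Descending
`n - 1` steps in the derived series thus leaves no orbital at all.
-/

open Filter Topology commutatorElement

/-! ### The action on the line -/

lemma ap_mul (g h : PermR) (x : ℝ) : ap (g * h) x = ap h (ap g x) := rfl

@[simp]
lemma ap_inv_ap (g : PermR) (x : ℝ) : ap g⁻¹ (ap g x) = x := g.unop.symm_apply_apply x

@[simp]
lemma ap_ap_inv (g : PermR) (x : ℝ) : ap g (ap g⁻¹ x) = x := g.unop.apply_symm_apply x

lemma ap_injective (g : PermR) : Function.Injective (ap g) := g.unop.injective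

lemma eq_one_of_forall_ap_eq {g : PermR} (h : ∀ x, ap g x = x) : g = 1 :=
  MulOpposite.unop_injective (Equiv.ext h)

lemma ap_inv_eq_self_iff {g : PermR} {x : ℝ} : ap g⁻¹ x = x ↔ ap g x = x := by
  rw [← (ap_injective g).eq_iff, ap_ap_inv, eq_comm]

lemma ap_commutator_eq_self_iff {g h : PermR} {x : ℝ} :
    ap ⁅g, h⁆ x = x ↔ ap h (ap g x) = ap g (ap h x) := by
  rw [commutatorElement_def, ap_mul, ap_mul, ap_mul, ← (ap_injective h).eq_iff, ap_ap_inv,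
    ← (ap_injective g).eq_iff, ap_ap_inv]

lemma notMem_supp {g : PermR} {x : ℝ} : x ∉ Supp g ↔ ap g x = x := not_not

lemma mem_orbitOf_self (G : Subgroup PermR) (x : ℝ) : x ∈ orbitOf G x := ⟨1, G.one_mem, rfl⟩

namespace IsOrbital

variable {g h : PermR} {a b x : ℝ}

lemma ap_left (hg : IsOrbital g a b) : ap g a = a := notMem_supp.1 hg.2.2.1

lemma ap_right (hg : IsOrbital g a b) : ap g b = b := notMem_supp.1 hg.2.2.2

lemma ap_ne (hg : IsOrbital g a b) (hx : x ∈ Ioo a b) : ap g x ≠ x := hg.2.1 hx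

lemma le_left_of_fixed (hg : IsOrbital g a b) (hx : ap g x = x) (hxb : x < b) : x ≤ a :=
  not_lt.1 fun hax => hg.ap_ne ⟨hax, hxb⟩ hx

lemma right_le_of_fixed (hg : IsOrbital g a b) (hx : ap g x = x) (hax : a < x) : b ≤ x :=
  not_lt.1 fun hxb => hg.ap_ne ⟨hax, hxb⟩ hx

lemma conj (hg : IsOrbital g a b) (hh : StrictMono (ap h)) :
    IsOrbital (h⁻¹ * g * h) (ap h a) (ap h b) := by
  refine ⟨hh hg.1, fun x hx hfix => ?_, ?_, ?_⟩
  · obtain ⟨y, rfl⟩ : ∃ y, ap h y = x := ⟨ap h⁻¹ x, ap_ap_inv h x⟩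
    rw [ap_mul, ap_mul, ap_inv_ap] at hfix
    exact hg.ap_ne ⟨hh.lt_iff_lt.1 hx.1, hh.lt_iff_lt.1 hx.2⟩ (hh.injective hfix)
  · rw [notMem_supp, ap_mul, ap_mul, ap_inv_ap, hg.ap_left]
  · rw [notMem_supp, ap_mul, ap_mul, ap_inv_ap, hg.ap_right]

end IsOrbital

/-! ### Piecewise linear maps and their germs -/

lemma IsLocallyAffineAt.analyticAt {g : PermR} {x : ℝ} (h : IsLocallyAffineAt g x) :
    AnalyticAt ℝ (ap g) x := by
  obtain ⟨m, k, hmk⟩ := h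
  have : AnalyticAt ℝ (fun y : ℝ => m * y + k) x := by fun_prop
  exact this.congr (EventuallyEq.symm hmk)

lemma exists_eqOn_affine_of_isPreconnected {g : PermR} {s : Set ℝ} (hs : IsPreconnected s)
    (h : ∀ x ∈ s, IsLocallyAffineAt g x) : ∃ m k : ℝ, EqOn (ap g) (fun x => m * x + k) s := by
  rcases s.eq_empty_or_nonempty with rfl | ⟨z, hz⟩
  · exact ⟨0, 0, eqOn_empty _ _⟩
  obtain ⟨m, k, hmk⟩ := h z hz
  have affine_analytic : AnalyticOnNhd ℝ (fun x : ℝ => m * x + k) s := fun x _ => by fun_prop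
  have g_analytic : AnalyticOnNhd ℝ (ap g) s := fun x hx => (h x hx).analyticAt
  exact ⟨m, k, g_analytic.eqOn_of_preconnected_of_eventuallyEq affine_analytic hs hz hmk⟩

lemma exists_slope_of_forall_isLocallyAffineAt {g : PermR} (hg : Continuous (ap g)) {a b : ℝ}
    (hab : a < b) (h : ∀ x ∈ Ioo a b, IsLocallyAffineAt g x) :
    ∃ m : ℝ, ∀ x ∈ Icc a b, ap g x = ap g a + m * (x - a) := by
  obtain ⟨m, k, hmk⟩ := exists_eqOn_affine_of_isPreconnected isPreconnected_Ioo h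
  have hIcc : EqOn (ap g) (fun x => m * x + k) (Icc a b) := by
    rw [← closure_Ioo hab.ne]
    exact hmk.closure hg (by fun_prop)
  refine ⟨m, fun x hx => ?_⟩
  rw [hIcc hx, hIcc (left_mem_Icc.2 hab.le)]
  ring

/-- The group of elements acting trivially on some interval `(a, e)` with `e > a`. -/
def rightGermKer (a : ℝ) : Subgroup PermR where
  carrier := {g | ∀ᶠ y in 𝓝[>] a, ap g y = y}
  one_mem' := by
    rw [mem_ofPred_eq]
    exact Eventually.of_forall fun _ => rfl
  mul_mem' := fun {g h} hg hh => by
    rw [mem_ofPred_eq] at hg hh ⊢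
    filter_upwards [hg, hh] with y hgy hhy
    rw [ap_mul, hgy, hhy]
  inv_mem' := fun {g} hg => by simpa only [mem_ofPred_eq, ap_inv_eq_self_iff] using hg

lemma mem_rightGermKer {g : PermR} {a : ℝ} :
    g ∈ rightGermKer a ↔ ∀ᶠ y in 𝓝[>] a, ap g y = y := Iff.rfl

lemma IsOrbital.lt_left_of_mem_rightGermKer {g : PermR} {a b x : ℝ} (hg : IsOrbital g a b)
    (hx : g ∈ rightGermKer x) (hxb : x < b) : x < a := by
  by_contra! hax
  obtain ⟨y, hfix, hxy, hyb⟩ := ((mem_rightGermKer.1 hx).and (Ioo_mem_nhdsGT hxb)).exists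
  exact hg.ap_ne ⟨hax.trans_lt hxy, hyb⟩ hfix

lemma IsOrbital.notMem_rightGermKer {g : PermR} {a b : ℝ} (hg : IsOrbital g a b) :
    g ∉ rightGermKer a :=
  fun h => (hg.lt_left_of_mem_rightGermKer h hg.1).false

namespace IsPL

variable {g h : PermR} {a p x : ℝ}

lemma continuous (hg : IsPL g) : Continuous (ap g) :=
  hg.1.monotone.continuous_of_surjective g.unop.surjective

lemma mem_Ioo_of_ap_ne (hg : IsPL g) (hx : ap g x ≠ x) : x ∈ Ioo (0 : ℝ) 1 :=
  not_imp_comm.1 (hg.2.1 x) hx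

lemma exists_isOrbital (hg : IsPL g) (hx : ap g x ≠ x) :
    ∃ a b, IsOrbital g a b ∧ x ∈ Ioo a b := by
  obtain ⟨hx0, hx1⟩ := hg.mem_Ioo_of_ap_ne hx
  have hclosed : IsClosed {y | ap g y = y} := isClosed_eq hg.continuous continuous_id
  have hbelow : BddAbove ({y | ap g y = y} ∩ Iic x) := ⟨x, fun _ hy => hy.2⟩
  have habove : BddBelow ({y | ap g y = y} ∩ Ici x) := ⟨x, fun _ hy => hy.2⟩
  obtain ⟨ha, hax⟩ := (hclosed.inter isClosed_Iic).csSup_mem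
    ⟨0, hg.2.1 0 (by simp), hx0.le⟩ hbelow
  obtain ⟨hb, hxb⟩ := (hclosed.inter isClosed_Ici).csInf_mem
    ⟨1, hg.2.1 1 (by simp), hx1.le⟩ habove
  set a := sSup ({y | ap g y = y} ∩ Iic x)
  set b := sInf ({y | ap g y = y} ∩ Ici x)
  have hax' : a < x := lt_of_le_of_ne hax fun h => hx (h ▸ ha)
  have hxb' : x < b := lt_of_le_of_ne hxb fun h => hx (h ▸ hb)
  refine ⟨a, b, ⟨hax'.trans hxb', fun y hy hfix => ?_, notMem_supp.2 ha, notMem_supp.2 hb⟩,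
    hax', hxb'⟩
  rcases le_total y x with hyx | hxy
  · exact hy.1.not_ge (le_csSup hbelow ⟨hfix, hyx⟩)
  · exact hy.2.not_ge (csInf_le habove ⟨hfix, hxy⟩)

-- The exceptions `0` and `1` are not counted as breakpoints but may fail to be locally affine.
lemma isLocallyAffineAt (hg : IsPL g) (hx : x ∉ Breakpoints g ∪ {0, 1}) :
    IsLocallyAffineAt g x := by
  obtain ⟨hx0, hx1, hbreak⟩ : x ≠ 0 ∧ x ≠ 1 ∧ x ∉ Breakpoints g := by simpa using hx
  by_cases hx01 : x ∈ Ioo (0 : ℝ) 1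
  · exact not_not.1 fun h => hbreak ⟨hx01, h⟩
  · have hxIcc : x ∉ Icc (0 : ℝ) 1 := fun h =>
      hx01 ⟨lt_of_le_of_ne h.1 hx0.symm, lt_of_le_of_ne h.2 hx1⟩
    refine ⟨1, 0, ?_⟩
    filter_upwards [isClosed_Icc.compl_mem_nhds hxIcc] with y hy
    rw [hg.2.1 y fun h => hy (Ioo_subset_Icc_self h), one_mul, add_zero]

lemma eventually_isLocallyAffineAt (hg : IsPL g) (p : ℝ) :
    ∀ᶠ x in 𝓝[≠] p, IsLocallyAffineAt g x := by
  have hfin : ((Breakpoints g ∪ {0, 1}) \ {p}).Finite := (hg.2.2.union (by simp)).sdiff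
  filter_upwards [nhdsWithin_le_nhds (hfin.isClosed.compl_mem_nhds (by simp : p ∉ _)),
    self_mem_nhdsWithin] with x hx hxp
  exact hg.isLocallyAffineAt fun hx' => hx ⟨hx', hxp⟩

lemma exists_slope_nhdsGT (hg : IsPL g) (p : ℝ) :
    ∃ m : ℝ, ∀ᶠ y in 𝓝[>] p, ap g y = ap g p + m * (y - p) := by
  obtain ⟨e, hpe, he⟩ := mem_nhdsGT_iff_exists_Ioo_subset.1
    (nhdsGT_le_nhdsNE p (hg.eventually_isLocallyAffineAt p))
  obtain ⟨m, hm⟩ := exists_slope_of_forall_isLocallyAffineAt hg.continuous hpe he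
  refine ⟨m, ?_⟩
  filter_upwards [Ioo_mem_nhdsGT hpe] with y hy using hm y (Ioo_subset_Icc_self hy)

lemma eventually_ap_ne_of_notMem_rightGermKer (hg : IsPL g) (hp : g ∉ rightGermKer p) :
    ∀ᶠ y in 𝓝[>] p, ap g y ≠ y := by
  obtain ⟨m, hm⟩ := hg.exists_slope_nhdsGT p
  have affine_analytic : AnalyticAt ℝ (fun y => ap g p + m * (y - p)) p := by fun_prop
  rcases affine_analytic.eventually_eq_or_eventually_ne analyticAt_id with heq | hne
  · refine absurd ?_ hp
    filter_upwards [hm, nhdsWithin_le_nhds heq] with y hy hy' using hy.trans hy'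
  · filter_upwards [hm, nhdsGT_le_nhdsNE p hne] with y hy hy' using hy ▸ hy'

lemma exists_isOrbital_of_notMem_rightGermKer (hg : IsPL g) (hp : g ∉ rightGermKer p) :
    ∃ u v, IsOrbital g u v ∧ p ∈ Ico u v := by
  obtain ⟨e, hpe, he⟩ := mem_nhdsGT_iff_exists_Ioo_subset.1
    (hg.eventually_ap_ne_of_notMem_rightGermKer hp)
  obtain ⟨y, hpy, hye⟩ := exists_between (mem_Ioi.1 hpe)
  obtain ⟨u, v, huv, huy, hyv⟩ := hg.exists_isOrbital (he ⟨hpy, hye⟩)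
  exact ⟨u, v, huv, not_lt.1 fun hpu => he ⟨hpu, huy.trans hye⟩ huv.ap_left, hpy.trans hyv⟩

lemma commutator_mem_rightGermKer (hg : IsPL g) (hh : IsPL h) (hga : ap g a = a)
    (hha : ap h a = a) : ⁅g, h⁆ ∈ rightGermKer a := by
  have preserves_nhdsGT : ∀ {f : PermR}, IsPL f → ap f a = a →
      Tendsto (ap f) (𝓝[>] a) (𝓝[>] a) := fun {f} hf hfa => by
    have hmaps : MapsTo (ap f) (Ioi a) (Ioi a) := fun y hy => hfa ▸ hf.1 hy
    have hcont : ContinuousWithinAt (ap f) (Ioi a) a := hf.continuous.continuousWithinAt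
    simpa only [hfa] using hcont.tendsto_nhdsWithin hmaps
  obtain ⟨m, hm⟩ := hg.exists_slope_nhdsGT a
  obtain ⟨k, hk⟩ := hh.exists_slope_nhdsGT a
  filter_upwards [hm, hk, (preserves_nhdsGT hg hga).eventually hk,
    (preserves_nhdsGT hh hha).eventually hm] with y hgy hhy hhgy hghy
  rw [ap_commutator_eq_self_iff, hhgy, hghy, hgy, hhy, hga, hha]
  ring

end IsPL

lemma IsOrbital.exists_breakpoint {g : PermR} {a b : ℝ} (hab : IsOrbital g a b) (hg : IsPL g) :
    ∃ c ∈ Breakpoints g, c ∈ Ioo a b := by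
  by_contra! hno
  have haffine : ∀ x ∈ Ioo a b, IsLocallyAffineAt g x := fun x hx =>
    not_not.1 fun h => hno x ⟨hg.mem_Ioo_of_ap_ne (hab.ap_ne hx), h⟩ hx
  obtain ⟨m, hm⟩ := exists_slope_of_forall_isLocallyAffineAt hg.continuous hab.1 haffine
  have hm1 : m = 1 := by
    have hb := hm b (right_mem_Icc.2 hab.1.le)
    rw [hab.ap_left, hab.ap_right] at hb
    have : b - a ≠ 0 := sub_ne_zero.2 hab.1.ne'
    exact mul_right_cancel₀ this (by linarith)
  obtain ⟨x, hx⟩ := nonempty_Ioo.2 hab.1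
  apply hab.ap_ne hx
  rw [hm x (Ioo_subset_Icc_self hx), hab.ap_left, hm1]
  ring

/-! ### Reflection in the midpoint of the unit interval -/

/-- Conjugation by `x ↦ 1 - x`. It exchanges left and right ends of orbitals, so that statements
about right ends follow from those about left ends. -/
def reflection : PermR ≃* PermR := MulAut.conj (MulOpposite.op (Equiv.subLeft 1))

lemma ap_reflection (g : PermR) (x : ℝ) : ap (reflection g) x = 1 - ap g (1 - x) := by
  change -(ap g (1 - x)) + 1 = _
  ring

lemma ap_reflection_eq_self_iff {g : PermR} {x : ℝ} :
    ap (reflection g) x = x ↔ ap g (1 - x) = 1 - x := by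
  rw [ap_reflection]
  constructor <;> intro h <;> linarith

lemma isOrbital_reflection {g : PermR} {a b : ℝ} :
    IsOrbital (reflection g) a b ↔ IsOrbital g (1 - b) (1 - a) := by
  have hsupp : Supp (reflection g) = (1 - ·) ⁻¹' Supp g :=
    Set.ext fun x => not_congr ap_reflection_eq_self_iff
  have hIoo : Ioo (1 - b) (1 - a) = (1 - ·) '' Ioo a b := by simp
  rw [IsOrbital, IsOrbital, hsupp, hIoo, image_subset_iff, sub_lt_sub_iff_left,
    mem_preimage, mem_preimage, and_comm (a := 1 - a ∉ Supp g)]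

lemma IsOrbital.reflect {g : PermR} {a b : ℝ} (h : IsOrbital g a b) :
    IsOrbital (reflection g) (1 - b) (1 - a) := by
  simpa only [isOrbital_reflection, sub_sub_cancel] using h

lemma IsLocallyAffineAt.reflect {g : PermR} {x : ℝ} (h : IsLocallyAffineAt g (1 - x)) :
    IsLocallyAffineAt (reflection g) x := by
  obtain ⟨m, k, hmk⟩ := h
  refine ⟨m, 1 - m - k, ?_⟩
  have hcont : Tendsto (fun y : ℝ => 1 - y) (𝓝 x) (𝓝 (1 - x)) :=
    (continuous_const.sub continuous_id).tendsto x
  filter_upwards [hcont.eventually hmk] with y hy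
  rw [ap_reflection, hy]
  ring

lemma IsPL.reflect {g : PermR} (hg : IsPL g) : IsPL (reflection g) := by
  have mem_Ioo_iff (x : ℝ) : 1 - x ∈ Ioo (0 : ℝ) 1 ↔ x ∈ Ioo (0 : ℝ) 1 := by
    simp only [mem_Ioo, sub_pos, sub_lt_self_iff, and_comm]
  refine ⟨fun x y hxy => ?_, fun x hx => ?_, ?_⟩
  · have := hg.1 (sub_lt_sub_left hxy (1 : ℝ))
    rw [ap_reflection, ap_reflection]
    linarith
  · exact ap_reflection_eq_self_iff.2 (hg.2.1 _ (mt (mem_Ioo_iff x).1 hx))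
  · refine (hg.2.2.preimage (sub_right_injective (b := (1 : ℝ))).injOn).subset fun x hx => ?_
    exact ⟨(mem_Ioo_iff x).2 hx.1, fun h => hx.2 h.reflect⟩

lemma IsPL.exists_isOrbital_of_not_eventually_nhdsLT {g : PermR} (hg : IsPL g) {p : ℝ}
    (hp : ¬ ∀ᶠ y in 𝓝[<] p, ap g y = y) : ∃ u v, IsOrbital g u v ∧ p ∈ Ioc u v := by
  have hreflect : reflection g ∉ rightGermKer (1 - p) := fun h => hp <| by
    have hmaps : MapsTo (fun y : ℝ => 1 - y) (Iio p) (Ioi (1 - p)) := fun y hy =>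
      mem_Ioi.2 (sub_lt_sub_left (mem_Iio.1 hy) 1)
    have htendsto : Tendsto (fun y : ℝ => 1 - y) (𝓝[<] p) (𝓝[>] (1 - p)) :=
      (continuous_const.sub continuous_id).continuousWithinAt.tendsto_nhdsWithin hmaps
    filter_upwards [htendsto.eventually (mem_rightGermKer.1 h)] with y hy
    simpa only [ap_reflection_eq_self_iff, sub_sub_cancel] using hy
  obtain ⟨u, v, huv, hup, hpv⟩ := hg.reflect.exists_isOrbital_of_notMem_rightGermKer hreflect
  exact ⟨1 - v, 1 - u, isOrbital_reflection.1 huv, by linarith, by linarith⟩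

/-! ### Chainless groups -/

/-- `G` is a chainless subgroup of `PL₊(I)`. -/
structure IsChainlessPL (G : Subgroup PermR) : Prop where
  isPL : ∀ g ∈ G, IsPL g
  chainless : ¬ AdmitsTransitionChain G

namespace IsChainlessPL

variable {G : Subgroup PermR} {f g h : PermR} {a b c d l r : ℝ}

lemma map_reflection (hG : IsChainlessPL G) : IsChainlessPL (G.map reflection.toMonoidHom) where
  isPL := by
    rintro _ ⟨g, hg, rfl⟩
    exact (hG.isPL g hg).reflect
  chainless := by
    rintro ⟨_, ⟨g, hg, rfl⟩, _, ⟨h, hh, rfl⟩, a, b, c, d, hab, hcd, hac, hcb, hbd⟩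
    exact hG.chainless ⟨h, hh, g, hg, 1 - d, 1 - c, 1 - b, 1 - a, isOrbital_reflection.1 hcd,
      isOrbital_reflection.1 hab, by linarith, by linarith, by linarith⟩

lemma right_le_ap_of_ap_left_eq (hG : IsChainlessPL G) (hh : h ∈ G) (hg : g ∈ G)
    (hac : IsOrbital h a c) (hga : ap g a = a) : c ≤ ap g c := by
  by_contra! hgc
  have hgc_mem : ap g c ∈ Ioo a c := ⟨hga ▸ (hG.isPL g hg).1 hac.1, hgc⟩
  have hcomm : ⁅h, g⁆ ∈ G := G.commutator_le_self (Subgroup.commutator_mem_commutator hh hg)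
  have hmoves : ap ⁅h, g⁆ c ≠ c := fun hfix => hac.ap_ne hgc_mem <| by
    rw [← ap_commutator_eq_self_iff.1 hfix, hac.ap_right]
  obtain ⟨u, v, huv, huc, hcv⟩ := (hG.isPL _ hcomm).exists_isOrbital hmoves
  have htrivial : ⁅h, g⁆ ∈ rightGermKer a :=
    (hG.isPL h hh).commutator_mem_rightGermKer (hG.isPL g hg) hac.ap_left hga
  have hau : a < u := huv.lt_left_of_mem_rightGermKer htrivial (hac.1.trans hcv)
  exact hG.chainless ⟨h, hh, ⁅h, g⁆, hcomm, a, c, u, v, hac, huv, hau, huc, hcv⟩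

lemma ap_right_eq_of_ap_left_eq (hG : IsChainlessPL G) (hh : h ∈ G) (hg : g ∈ G)
    (hac : IsOrbital h a c) (hga : ap g a = a) : ap g c = c := by
  refine le_antisymm ?_ (hG.right_le_ap_of_ap_left_eq hh hg hac hga)
  have hinv := hG.right_le_ap_of_ap_left_eq hh (G.inv_mem hg) hac (ap_inv_eq_self_iff.2 hga)
  simpa only [ap_ap_inv] using (hG.isPL g hg).1.monotone hinv

lemma ap_left_eq_of_ap_right_eq (hG : IsChainlessPL G) (hh : h ∈ G) (hg : g ∈ G)
    (hac : IsOrbital h a c) (hgc : ap g c = c) : ap g a = a := by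
  have hfix : ap (reflection g) (1 - c) = 1 - c := by
    rwa [ap_reflection_eq_self_iff, sub_sub_cancel]
  have : ap (reflection g) (1 - a) = 1 - a :=
    hG.map_reflection.ap_right_eq_of_ap_left_eq (Subgroup.mem_map_of_mem _ hh)
      (Subgroup.mem_map_of_mem _ hg) hac.reflect hfix
  simpa only [ap_reflection_eq_self_iff, sub_sub_cancel] using this

theorem eq_or_nested (hG : IsChainlessPL G) (hf : f ∈ G) (hg : g ∈ G) (hab : IsOrbital f a b)
    (hcd : IsOrbital g c d) (had : a < d) (hcb : c < b) :
    (a = c ∧ b = d) ∨ (a < c ∧ d < b) ∨ (c < a ∧ b < d) := by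
  rcases lt_trichotomy a c with hac | rfl | hca
  · have hdb : d ≤ b := not_lt.1 fun hbd =>
      hG.chainless ⟨f, hf, g, hg, a, b, c, d, hab, hcd, hac, hcb, hbd⟩
    refine .inr (.inl ⟨hac, lt_of_le_of_ne hdb ?_⟩)
    rintro rfl
    exact hab.ap_ne ⟨hac, hcb⟩ (hG.ap_left_eq_of_ap_right_eq hg hf hcd hab.ap_right)
  · have hgb := hG.ap_right_eq_of_ap_left_eq hf hg hab hcd.ap_left
    have hfd := hG.ap_right_eq_of_ap_left_eq hg hf hcd hab.ap_left
    exact .inl ⟨rfl, (hab.right_le_of_fixed hfd had).antisymm (hcd.right_le_of_fixed hgb hcb)⟩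
  · have hbd : b ≤ d := not_lt.1 fun hdb =>
      hG.chainless ⟨g, hg, f, hf, c, d, a, b, hcd, hab, hca, had, hdb⟩
    refine .inr (.inr ⟨hca, lt_of_le_of_ne hbd ?_⟩)
    rintro rfl
    exact hcd.ap_ne ⟨hca, had⟩ (hG.ap_left_eq_of_ap_right_eq hf hg hab hcd.ap_right)

lemma exists_isOrbital_strictly_containing (hG : IsChainlessPL G) (hf : f ∈ G) (hh : h ∈ G)
    (hab : IsOrbital f a b) (hha : ap h a ≠ a) : ∃ u v, IsOrbital h u v ∧ u < a ∧ b < v := by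
  obtain ⟨u, v, huv, hua, hav⟩ := (hG.isPL h hh).exists_isOrbital hha
  rcases hG.eq_or_nested hf hh hab huv hav (hua.trans hab.1) with ⟨rfl, -⟩ | ⟨hau, -⟩ | hnested
  · exact (lt_irrefl _ hua).elim
  · exact (lt_asymm hau hua).elim
  · exact ⟨u, v, huv, hnested⟩

theorem ap_left_eq_of_translate_meets (hG : IsChainlessPL G) (hf : f ∈ G) (hh : h ∈ G)
    (hab : IsOrbital f a b) (hleft : a < ap h b) (hright : ap h a < b) : ap h a = a := by
  by_contra hha
  obtain ⟨u, v, huv, hua, hbv⟩ := hG.exists_isOrbital_strictly_containing hf hh hab hha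
  have no_fixed_point : ∀ x ∈ Icc a b, ap h x ≠ x := fun x hx =>
    huv.ap_ne ⟨hua.trans_le hx.1, hx.2.trans_lt hbv⟩
  have hcont : ContinuousOn (ap h) (Icc a b) := (hG.isPL h hh).continuous.continuousOn
  have hconj : h⁻¹ * f * h ∈ G := G.mul_mem (G.mul_mem (G.inv_mem hh) hf) hh
  rcases hG.eq_or_nested hf hconj hab (hab.conj (hG.isPL h hh).1) hleft hright with
    ⟨heq, -⟩ | ⟨hl, hr⟩ | ⟨hl, hr⟩
  · exact hha heq.symm
  · obtain ⟨x, hx, hfix⟩ := exists_mem_Icc_isFixedPt hcont hab.1.le hl.le hr.le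
    exact no_fixed_point x hx hfix
  · have hsurj : SurjOn (ap h) (Icc a b) (Icc a b) :=
      (intermediate_value_Icc hab.1.le hcont).trans' (Icc_subset_Icc hl.le hr.le)
    obtain ⟨x, hx, hfix⟩ := exists_mem_Icc_isFixedPt_of_surjOn hcont hab.1.le hsurj
    exact no_fixed_point x hx hfix

lemma mem_rightGermKer_of_strictly_contained (hG : IsChainlessPL G) (hf : f ∈ G) (hg : g ∈ G)
    (hab : IsOrbital f a b) (hlr : IsOrbital g l r) (hla : l < a) (hbr : b < r) :
    f ∈ rightGermKer l := by
  by_contra hfl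
  obtain ⟨u, v, huv, hul, hlv⟩ := (hG.isPL f hf).exists_isOrbital_of_notMem_rightGermKer hfl
  have hva : v ≤ a := huv.right_le_of_fixed hab.ap_left (hul.trans_lt hla)
  have hab' := hab.1
  have hlr' := hlr.1
  rcases hG.eq_or_nested hf hg huv hlr (hul.trans_lt hlr') hlv with h | h | h
  · linarith [h.2]
  · linarith [h.2]
  · linarith [h.1]

end IsChainlessPL

/-! ### Breakpoint orbits meeting an orbital -/

lemma IsLocallyAffineAt.eventually_ap_eq {f : PermR} {c : ℝ} (hc : IsLocallyAffineAt f c)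
    (hfix : ∃ᶠ y in 𝓝[≠] c, ap f y = y) : ∀ᶠ y in 𝓝 c, ap f y = y :=
  (hc.analyticAt.frequently_eq_iff_eventually_eq analyticAt_id).1 hfix

lemma exists_last_not_isLocallyAffineAt {f : PermR} (hf : Continuous (ap f)) {l a : ℝ}
    (hl : f ∈ rightGermKer l) (hla : l < a) (ha : f ∉ rightGermKer a) :
    ∃ c ∈ Ioc l a, ap f c = c ∧ ¬ IsLocallyAffineAt f c ∧
      ∀ p ∈ Ioc c a, ¬ ∀ᶠ y in 𝓝[<] p, ap f y = y := by
  set U : Set ℝ := {x ∈ Ioo l a | ∀ᶠ y in 𝓝 x, ap f y = y}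
  obtain ⟨x₀, hx₀⟩ : U.Nonempty := Filter.nonempty_of_mem <| inter_mem (Ioo_mem_nhdsGT hla)
    ((eventually_nhdsWithin_eventually_nhds_iff_of_isOpen isOpen_Ioi).2 hl)
  obtain ⟨c, hc⟩ := Real.exists_isLUB ⟨x₀, hx₀⟩ ⟨a, fun x (hx : x ∈ U) => hx.1.2.le⟩
  have hlc : l < c := hx₀.1.1.trans_le (hc.1 hx₀)
  have hca : c ≤ a := hc.2 fun x hx => hx.1.2.le
  have no_fixed_germ_left : ∀ p ∈ Ioc c a, ¬ ∀ᶠ y in 𝓝[<] p, ap f y = y := by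
    rintro p ⟨hcp, hpa⟩ hfix
    obtain ⟨x, ⟨hcx, hxp⟩, hx⟩ := Filter.nonempty_of_mem <| inter_mem (Ioo_mem_nhdsLT hcp)
      ((eventually_nhdsWithin_eventually_nhds_iff_of_isOpen isOpen_Iio).2 hfix)
    exact hcx.not_ge (hc.1 ⟨⟨hlc.trans hcx, hxp.trans_le hpa⟩, hx⟩)
  have not_fixed_near : ¬ ∀ᶠ y in 𝓝 c, ap f y = y := fun hfix => by
    rcases hca.eq_or_lt with rfl | hca
    · exact ha (nhdsWithin_le_nhds hfix)
    · obtain ⟨x, ⟨hcx, hxa⟩, hx⟩ := Filter.nonempty_of_mem <| inter_mem (Ioo_mem_nhdsGT hca)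
        (nhdsWithin_le_nhds (eventually_eventually_nhds.2 hfix))
      exact hcx.not_ge (hc.1 ⟨⟨hlc.trans hcx, hxa⟩, hx⟩)
  have frequently_mem_U : ∃ᶠ y in 𝓝 c, y ∈ U := hc.frequently_nhds_mem ⟨x₀, hx₀⟩
  refine ⟨c, ⟨hlc, hca⟩, ?_, fun haffine => not_fixed_near ?_, no_fixed_germ_left⟩
  · exact (isClosed_eq hf continuous_id).mem_of_frequently_of_tendsto
      (frequently_mem_U.mono fun y hy => hy.2.self_of_nhds) tendsto_id
  · refine haffine.eventually_ap_eq (frequently_nhdsWithin_iff.2 (frequently_mem_U.mono ?_))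
    exact fun y hy => ⟨hy.2.self_of_nhds, fun hyc => not_fixed_near (hyc ▸ hy.2)⟩

theorem IsChainlessPL.exists_breakpoint_disjoint_orbitOf {G : Subgroup PermR}
    (hG : IsChainlessPL G) {f g : PermR} (hf : f ∈ G) (hg : g ∈ G) {a b l r : ℝ}
    (hab : IsOrbital f a b) (hlr : IsOrbital g l r) (hla : l < a) (hbr : b < r) :
    ∃ c ∈ Breakpoints f, c ∈ Ioo l r ∧ Disjoint (orbitOf G c) (Ioo a b) := by
  have hab' := hab.1
  obtain ⟨c, ⟨hlc, hca⟩, hfc, hnotaffine, no_fixed_germ⟩ :=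
    exists_last_not_isLocallyAffineAt (hG.isPL f hf).continuous
      (hG.mem_rightGermKer_of_strictly_contained hf hg hab hlr hla hbr) hla
      hab.notMem_rightGermKer
  have hc : c ∈ Ioo l r := ⟨hlc, by linarith⟩
  refine ⟨c, ⟨(hG.isPL g hg).mem_Ioo_of_ap_ne (hlr.ap_ne hc), hnotaffine⟩, hc, ?_⟩
  rw [Set.disjoint_left]
  rintro _ ⟨h, hh, rfl⟩ ⟨hahc, hhcb⟩
  have hk : h⁻¹ ∈ G := G.inv_mem hh
  have hmono := (hG.isPL h⁻¹ hk).1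
  have hac : ap h⁻¹ a < c := by simpa only [ap_inv_ap] using hmono hahc
  have hcb : c < ap h⁻¹ b := by simpa only [ap_inv_ap] using hmono hhcb
  rcases lt_or_ge a (ap h⁻¹ b) with hmeet | hle
  · have := hG.ap_left_eq_of_translate_meets hf hk hab hmeet (by linarith)
    linarith
  · obtain ⟨u, v, huv, hub, hbv⟩ := (hG.isPL f hf).exists_isOrbital_of_not_eventually_nhdsLT
      (no_fixed_germ _ ⟨hcb, hle⟩)
    have hcu : c ≤ u := huv.le_left_of_fixed hfc (hcb.trans_le hbv)
    have hconj : h⁻¹⁻¹ * f * h⁻¹ ∈ G := G.mul_mem (G.mul_mem (G.inv_mem hk) hf) hk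
    rcases hG.eq_or_nested hconj hf (hab.conj hmono) huv (by linarith) hub with
      hcmp | hcmp | hcmp
    · linarith [hcmp.1]
    · linarith [hcmp.2]
    · linarith [hcmp.1]

/-- The `G`-orbits of breakpoints of elements of `G`. -/
abbrev breakpointOrbits (G : Subgroup PermR) : Set (Set ℝ) := orbitOf G '' BreakSet (G : Set PermR)

/-- The `G`-orbits of breakpoints that have a point in `(a, b)`. -/
def breakpointOrbitsMeeting (G : Subgroup PermR) (a b : ℝ) : Set (Set ℝ) :=
  {O ∈ breakpointOrbits G | (O ∩ Ioo a b).Nonempty}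

lemma breakpointOrbitsMeeting_subset (G : Subgroup PermR) (a b : ℝ) :
    breakpointOrbitsMeeting G a b ⊆ breakpointOrbits G := sep_subset _ _

lemma orbitOf_mem_breakpointOrbitsMeeting {G : Subgroup PermR} {f : PermR} (hf : f ∈ G)
    {a b c : ℝ} (hc : c ∈ Breakpoints f) (hcab : c ∈ Ioo a b) :
    orbitOf G c ∈ breakpointOrbitsMeeting G a b :=
  ⟨mem_image_of_mem _ (mem_biUnion (SetLike.mem_coe.2 hf) hc), c, mem_orbitOf_self G c, hcab⟩

lemma IsOrbital.breakpointOrbitsMeeting_nonempty {G : Subgroup PermR} {f : PermR} {a b : ℝ}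
    (hab : IsOrbital f a b) (hfG : f ∈ G) (hf : IsPL f) :
    (breakpointOrbitsMeeting G a b).Nonempty := by
  obtain ⟨c, hc, hcab⟩ := hab.exists_breakpoint hf
  exact ⟨_, orbitOf_mem_breakpointOrbitsMeeting hfG hc hcab⟩

namespace IsChainlessPL

variable {G : Subgroup PermR} {f g : PermR} {a b l r : ℝ}

lemma breakpointOrbitsMeeting_ssubset (hG : IsChainlessPL G) (hf : f ∈ G) (hg : g ∈ G)
    (hab : IsOrbital f a b) (hlr : IsOrbital g l r) (hla : l < a) (hbr : b < r) :
    breakpointOrbitsMeeting G a b ⊂ breakpointOrbitsMeeting G l r := by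
  obtain ⟨c, hc, hclr, hdisj⟩ := hG.exists_breakpoint_disjoint_orbitOf hf hg hab hlr hla hbr
  refine ssubset_iff_exists.2 ⟨fun O hO => ⟨hO.1, hO.2.mono ?_⟩, orbitOf G c,
    orbitOf_mem_breakpointOrbitsMeeting hf hc hclr, fun h => ?_⟩
  · exact inter_subset_inter_right _ (Ioo_subset_Ioo hla.le hbr.le)
  · exact h.2.ne_empty hdisj.inter_eq

lemma ncard_breakpointOrbitsMeeting_lt (hG : IsChainlessPL G) (hfin : (breakpointOrbits G).Finite)
    (hf : f ∈ G) (hg : g ∈ G) (hab : IsOrbital f a b) (hlr : IsOrbital g l r) (hla : l < a)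
    (hbr : b < r) :
    (breakpointOrbitsMeeting G a b).ncard < (breakpointOrbitsMeeting G l r).ncard :=
  ncard_lt_ncard (hG.breakpointOrbitsMeeting_ssubset hf hg hab hlr hla hbr)
    (hfin.subset (breakpointOrbitsMeeting_subset G l r))

/-! ### Towers and the derived series -/

lemma injOn_ncard_breakpointOrbitsMeeting (hG : IsChainlessPL G)
    (hfin : (breakpointOrbits G).Finite) {T : Set ((ℝ × ℝ) × PermR)} (hT : AdmitsTower G T) :
    InjOn (fun p => (breakpointOrbitsMeeting G p.1.1 p.1.2).ncard) T := by
  obtain ⟨⟨horbital, hnested, hsignature⟩, hmem⟩ := hT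
  have no_strict_nesting : ∀ p ∈ T, ∀ q ∈ T,
      (breakpointOrbitsMeeting G p.1.1 p.1.2).ncard =
        (breakpointOrbitsMeeting G q.1.1 q.1.2).ncard → ¬ (q.1.1 < p.1.1 ∧ p.1.2 < q.1.2) :=
    fun p hp q hq hpq ⟨hleft, hright⟩ => (hG.ncard_breakpointOrbitsMeeting_lt hfin (hmem p hp)
      (hmem q hq) (horbital p hp) (horbital q hq) hleft hright).ne hpq
  intro p hp q hq hpq
  have hp' := (horbital p hp).1
  have hq' := (horbital q hq).1
  obtain ⟨hleft, hright⟩ : p.1.1 < q.1.2 ∧ q.1.1 < p.1.2 := by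
    rcases hnested p hp q hq with h | h
    · obtain ⟨hl, hr⟩ := (Ioo_subset_Ioo_iff hp').1 h
      constructor <;> linarith
    · obtain ⟨hl, hr⟩ := (Ioo_subset_Ioo_iff hq').1 h
      constructor <;> linarith
  rcases hG.eq_or_nested (hmem p hp) (hmem q hq) (horbital p hp) (horbital q hq) hleft hright with
    ⟨hl, hr⟩ | h | h
  · have heq : p.1 = q.1 := Prod.ext hl hr
    exact Prod.ext heq (hsignature p hp q hq heq)
  · exact (no_strict_nesting q hq p hp hpq.symm h).elim
  · exact (no_strict_nesting p hp q hq hpq h).elim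

theorem encard_tower_le (hG : IsChainlessPL G) (hfin : (breakpointOrbits G).Finite)
    {T : Set ((ℝ × ℝ) × PermR)} (hT : AdmitsTower G T) :
    T.encard ≤ (breakpointOrbits G).ncard := by
  have hmaps : MapsTo (fun p => (breakpointOrbitsMeeting G p.1.1 p.1.2).ncard) T
      (Finset.Icc 1 (breakpointOrbits G).ncard : Finset ℕ) := fun p hp => by
    have hmeet := breakpointOrbitsMeeting_subset G p.1.1 p.1.2
    have hne := (hT.1.1 p hp).breakpointOrbitsMeeting_nonempty (hT.2 p hp) (hG.isPL _ (hT.2 p hp))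
    exact Finset.mem_coe.2 (Finset.mem_Icc.2
      ⟨(ncard_pos (hfin.subset hmeet)).2 hne, ncard_le_ncard hmeet hfin⟩)
  refine (encard_le_encard_of_injOn hmaps
    (hG.injOn_ncard_breakpointOrbitsMeeting hfin hT)).trans_eq ?_
  rw [encard_coe_eq_coe_finsetCard, Nat.card_Icc, Nat.add_sub_cancel]

end IsChainlessPL

lemma IsOrbital.exists_ap_left_ne_of_mem_commutator {G : Subgroup PermR}
    (hPL : ∀ g ∈ G, IsPL g) {H : Subgroup G} {x : G} (hx : x ∈ ⁅H, H⁆) {a b : ℝ}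
    (hab : IsOrbital (x : PermR) a b) : ∃ h ∈ H, ap h a ≠ a := by
  by_contra! hfix
  have hker : ⁅H, H⁆ ≤ (rightGermKer a).subgroupOf G :=
    Subgroup.commutator_le.2 fun g hg h hh =>
      (hPL g g.2).commutator_mem_rightGermKer (hPL h h.2) (hfix g hg) (hfix h hh)
  exact hab.notMem_rightGermKer (hker hx)

namespace IsChainlessPL

variable {G : Subgroup PermR}

theorem ncard_breakpointOrbitsMeeting_add_le (hG : IsChainlessPL G)
    (hfin : (breakpointOrbits G).Finite) {k : ℕ} {x : G} (hx : x ∈ derivedSeries G k) {a b : ℝ}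
    (hab : IsOrbital (x : PermR) a b) :
    (breakpointOrbitsMeeting G a b).ncard + k ≤ (breakpointOrbits G).ncard := by
  induction k generalizing x a b with
  | zero => exact ncard_le_ncard (breakpointOrbitsMeeting_subset G a b) hfin
  | succ k ih =>
    obtain ⟨h, hh, hmoves⟩ := hab.exists_ap_left_ne_of_mem_commutator hG.isPL hx
    obtain ⟨u, v, huv, hua, hbv⟩ :=
      hG.exists_isOrbital_strictly_containing x.2 h.2 hab hmoves
    have hlt := hG.ncard_breakpointOrbitsMeeting_lt hfin x.2 h.2 hab huv hua hbv
    have hle := ih hh huv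
    omega

theorem derivedSeries_eq_bot (hG : IsChainlessPL G) (hfin : (breakpointOrbits G).Finite) :
    derivedSeries G (breakpointOrbits G).ncard = ⊥ := by
  refine (Subgroup.eq_bot_iff_forall _).2 fun x hx =>
    Subtype.ext (eq_one_of_forall_ap_eq fun y => ?_)
  by_contra hy
  obtain ⟨a, b, hab, -⟩ := (hG.isPL x x.2).exists_isOrbital hy
  have hle := hG.ncard_breakpointOrbitsMeeting_add_le hfin hx hab
  have hpos := (ncard_pos (hfin.subset (breakpointOrbitsMeeting_subset G a b))).2
    (hab.breakpointOrbitsMeeting_nonempty x.2 (hG.isPL x x.2))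
  omega

end IsChainlessPL

theorem statement18 (G : Subgroup PermR) (hPL : ∀ g ∈ G, IsPL g)
    (hchainless : ¬ AdmitsTransitionChain G)
    (horbfin : ((orbitOf G) '' BreakSet (G : Set PermR)).Finite)
    (n : ℕ) (hn : n = ((orbitOf G) '' BreakSet (G : Set PermR)).ncard + 1) :
    (¬ ∃ T : Set ((ℝ × ℝ) × PermR), AdmitsTower G T ∧ T.ncard = n) ∧
    IsSolvable ↥G ∧ derivedLength ↥G ≤ n - 1 := by
  have hG : IsChainlessPL G := ⟨hPL, hchainless⟩
  have hderived := hG.derivedSeries_eq_bot horbfin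
  refine ⟨?_, ⟨⟨_, hderived⟩⟩, ?_⟩
  · rintro ⟨T, hT, hTn⟩
    have hle : T.ncard ≤ (orbitOf G '' BreakSet (G : Set PermR)).ncard :=
      ENat.toNat_le_of_le_natCast (hG.encard_tower_le horbfin hT)
    omega
  · rw [hn, Nat.add_sub_cancel]
    exact Nat.sInf_le hderived

end PLPaper
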